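/- Let n be a positive integer, let K be the set of odd divisors k of n with k^2 < 2n, and suppose n has an odd divisor whose square exceeds 2n; let k₀ be the smallest such divisor. Then the largest element of Lspec(n) (i.e., the length of the longest decomposition of n) is max(max K, 2n/k₀). If no odd divisor of n has square exceeding 2n, then the largest element of Lspec(n) is max K. -/

import Mathlib

/-- `IsDecomp n a m` means the `m` consecutive positive integers
`a+1, a+2, …, a+m` form a decomposition of `n`. -/
def IsDecomp (n a m : ℕ) : Prop :=
  1 ≤ m ∧ (Finset.range m).sum (fun i => a + i + 1) = n

/-- The length spectrum of `n`: the set of lengths of decompositions of `n`. -/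
def Lspec (n : ℕ) : Set ℕ := {m | ∃ a, IsDecomp n a m}

/-- The set `K`: the odd divisors of `n` whose square is less than `2 * n`. They are the odd
decomposition lengths of `n`. -/
def smallOddDivisors (n : ℕ) : Set ℕ := {k | k ∣ n ∧ Odd k ∧ k ^ 2 < 2 * n}

/-- The odd divisors of `n` whose square exceeds `2 * n`. Their cofactors in `2 * n` are the even
decomposition lengths of `n`. -/
def largeOddDivisors (n : ℕ) : Set ℕ := {k | k ∣ n ∧ Odd k ∧ 2 * n < k ^ 2}

theorem antitoneOn_nat_div_Ioi (a : ℕ) : AntitoneOn (a / ·) (Set.Ioi 0) :=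
  fun _ hb _ _ hle ↦ Nat.div_le_div_left hle hb

theorem two_mul_sum_range_add_add_one (a m : ℕ) :
    2 * ∑ i ∈ Finset.range m, (a + i + 1) = m * (2 * a + m + 1) := by
  induction m with
  | zero => simp
  | succ m ih => rw [Finset.sum_range_succ, mul_add, ih]; ring

theorem isDecomp_iff {n a m : ℕ} : IsDecomp n a m ↔ 0 < m ∧ m * (2 * a + m + 1) = 2 * n := by
  rw [IsDecomp, ← two_mul_sum_range_add_add_one, mul_right_inj' two_ne_zero, Nat.succ_le_iff]

/-- The cofactor `q` is the sum of the first and last terms of the decomposition. -/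
theorem mem_Lspec_iff {n m : ℕ} :
    m ∈ Lspec n ↔ 0 < m ∧ ∃ q, m * q = 2 * n ∧ m < q ∧ Odd (m + q) := by
  constructor
  · rintro ⟨a, hdecomp⟩
    obtain ⟨hm, hprod⟩ := isDecomp_iff.mp hdecomp
    exact ⟨hm, 2 * a + m + 1, hprod, by omega, a + m, by ring⟩
  · rintro ⟨hm, q, hprod, hlt, t, ht⟩
    have hq : 2 * (t - m) + m + 1 = q := by omega
    exact ⟨t - m, isDecomp_iff.mpr ⟨hm, by rw [hq, hprod]⟩⟩

theorem Lspec_inter_odd (n : ℕ) : Lspec n ∩ {m | Odd m} = smallOddDivisors n := by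
  ext m
  constructor
  · rintro ⟨hmem, hodd : Odd m⟩
    obtain ⟨hm, q, hprod, hlt, -⟩ := mem_Lspec_iff.mp hmem
    have hdvd : m ∣ n := hodd.coprime_two_right.dvd_of_dvd_mul_left (Dvd.intro q hprod)
    have hsq : m ^ 2 < 2 * n := by rw [← hprod, sq]; gcongr
    exact ⟨hdvd, hodd, hsq⟩
  · rintro ⟨⟨c, rfl⟩, hodd, hsq⟩
    have hprod : m * (2 * c) = 2 * (m * c) := by ring
    have hlt : m < 2 * c := by
      rw [← hprod, sq] at hsq
      exact lt_of_mul_lt_mul_left' hsq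
    exact ⟨mem_Lspec_iff.mpr ⟨hodd.pos, 2 * c, hprod, hlt, hodd.add_even (even_two_mul c)⟩, hodd⟩

theorem Lspec_inter_even {n : ℕ} (hn : 0 < n) :
    Lspec n ∩ {m | Even m} = (2 * n / ·) '' largeOddDivisors n := by
  ext m
  constructor
  · rintro ⟨hmem, heven : Even m⟩
    obtain ⟨-, q, hprod, hlt, hsum⟩ := mem_Lspec_iff.mp hmem
    have hodd : Odd q := Nat.odd_add'.mp hsum |>.mpr heven
    have hdvd : q ∣ n := hodd.coprime_two_right.dvd_of_dvd_mul_left (Dvd.intro_left m hprod)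
    have hsq : 2 * n < q ^ 2 := by rw [← hprod, sq]; gcongr; exact hodd.pos
    exact ⟨q, ⟨hdvd, hodd, hsq⟩, Nat.div_eq_of_eq_mul_left hodd.pos hprod.symm⟩
  · rintro ⟨k, ⟨⟨c, rfl⟩, hodd, hsq⟩, rfl⟩
    have hprod : 2 * c * k = 2 * (k * c) := by ring
    have hdiv : 2 * (k * c) / k = 2 * c := Nat.div_eq_of_eq_mul_left hodd.pos hprod.symm
    have hpos : 0 < 2 * c := Nat.mul_pos two_pos (Nat.pos_of_mul_pos_left hn)
    have hlt : 2 * c < k := by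
      rw [← hprod, sq] at hsq
      exact lt_of_mul_lt_mul_right' hsq
    have heven : Even (2 * c) := even_two_mul c
    simp only [hdiv]
    exact ⟨mem_Lspec_iff.mpr ⟨hpos, k, hprod, hlt, heven.add_odd hodd⟩, heven⟩

theorem Lspec_eq_union {n : ℕ} (hn : 0 < n) :
    Lspec n = smallOddDivisors n ∪ (2 * n / ·) '' largeOddDivisors n := by
  rw [← Lspec_inter_odd, ← Lspec_inter_even hn, ← Set.inter_union_distrib_left,
    Set.left_eq_inter]
  exact fun m _ ↦ (Nat.even_or_odd m).symm

/-- Let `n` be a positive integer and `K` the set of odd divisors `k` of `n`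
with `k² < 2n`. If `n` has an odd divisor whose square exceeds `2n`, and `k₀`
is the smallest such divisor, then the largest element of `Lspec n` is
`max (max K) (2n/k₀)`. If no odd divisor of `n` has square exceeding `2n`,
then the largest element of `Lspec n` is `max K`. -/
theorem longest_decomposition (n : ℕ) (hn : 0 < n) :
    (∀ k₀ M : ℕ,
        IsLeast {k | k ∣ n ∧ Odd k ∧ 2 * n < k ^ 2} k₀ →
        IsGreatest {k | k ∣ n ∧ Odd k ∧ k ^ 2 < 2 * n} M →
        IsGreatest (Lspec n) (max M (2 * n / k₀))) ∧
      ((¬ ∃ k : ℕ, k ∣ n ∧ Odd k ∧ 2 * n < k ^ 2) →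
        ∀ M : ℕ, IsGreatest {k | k ∣ n ∧ Odd k ∧ k ^ 2 < 2 * n} M →
          IsGreatest (Lspec n) M) := by
  rw [Lspec_eq_union hn]
  constructor
  · intro k₀ M hk₀ hM
    have hanti : AntitoneOn (2 * n / ·) (largeOddDivisors n) :=
      (antitoneOn_nat_div_Ioi (2 * n)).mono fun k hk ↦ hk.2.1.pos
    exact hM.union (hanti.map_isLeast hk₀)
  · intro hnone M hM
    have hempty : largeOddDivisors n = ∅ := Set.not_nonempty_iff_eq_empty.mp hnone
    rwa [hempty, Set.image_empty, Set.union_empty]
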